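/- Let k be a symmetric positive definite kernel with RKHS H. If k is c-universal on a compact Hausdorff space X, or cc-universal on a locally compact Hausdorff space X (with k bounded and continuous on X × X), or c0-universal on a locally compact Hausdorff space X (with k bounded and k(·,x) ∈ C_0(X) for all x), then k is characteristic to the set of Radon probability measures contained in M_b(X), M_bc(X), or M_b(X), respectively; in particular the map P ↦ ∫_X k(·,x) dP(x) is injective on that set of probability measures. -/

import Mathlib

open MeasureTheory Filter Topology RealInnerProductSpace
open scoped ZeroAtInfty

/-!
The Bochner integral `∫ Φ ∂μ` pairs with `f : H` to give `∫ ⟪f, Φ x⟫ ∂μ`, so two measures with the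
same mean embedding give the same integral to every function of the RKHS, hence, by universality, to
every compactly supported continuous function, and the uniqueness part of the Riesz representation
theorem identifies them.

What has to be justified is that `Φ` is Bochner integrable, since `H` need not be separable. For a
separately continuous kernel, `Φ` is weakly continuous. By Bessel's inequality the second moments
`∫ ⟪bᵢ, Φ x⟫² ∂μ` of the coordinates of `Φ` in a Hilbert basis are summable, so all but countably
many coordinates vanish almost everywhere; being continuous, these coordinates all vanish on the
support of `μ`, which is conull because `μ` is inner regular. Off a null set, `Φ` is therefore a
countable sum of continuous functions.
-/

open scoped CompactlySupported

section WeakContinuity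

variable {X H : Type*} [TopologicalSpace X] [NormedAddCommGroup H] [InnerProductSpace ℝ H]
  {Φ : X → H}

theorem continuous_inner_of_mem_span (hcont : ∀ x, Continuous fun y => ⟪Φ y, Φ x⟫) {g : H}
    (hg : g ∈ Submodule.span ℝ (Set.range Φ)) : Continuous fun x => ⟪g, Φ x⟫ := by
  induction hg using Submodule.span_induction with
  | mem g hg =>
    obtain ⟨x, rfl⟩ := hg
    simpa only [real_inner_comm] using hcont x
  | zero => simpa only [inner_zero_left] using continuous_const
  | add g h _ _ ihg ihh => simpa only [inner_add_left] using ihg.fun_add ihh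
  | smul a g _ ih => simpa only [real_inner_smul_left] using ih.const_mul a

theorem continuous_inner_of_mem_closure (hbdd : ∀ x, ∃ C, ∀ᶠ y in 𝓝 x, ‖Φ y‖ ≤ C) {S : Set H}
    (hS : ∀ g ∈ S, Continuous fun x => ⟪g, Φ x⟫) {f : H} (hf : f ∈ closure S) :
    Continuous fun x => ⟪f, Φ x⟫ := by
  refine continuous_of_locally_uniform_approx_of_continuousAt fun x u hu => ?_
  obtain ⟨ε, hε, hεu⟩ := Metric.mem_uniformity_dist.1 hu
  obtain ⟨C, hC⟩ := hbdd x
  obtain ⟨g, hg, hfg⟩ := Metric.mem_closure_iff.1 hf (ε / (|C| + 1)) (by positivity)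
  refine ⟨_, hC, _, (hS g hg).continuousAt, fun y hy => hεu ?_⟩
  rw [dist_eq_norm] at hfg ⊢
  calc ‖⟪f, Φ y⟫ - ⟪g, Φ y⟫‖ = ‖⟪f - g, Φ y⟫‖ := by rw [inner_sub_left]
    _ ≤ ‖f - g‖ * ‖Φ y‖ := norm_inner_le_norm _ _
    _ ≤ ‖f - g‖ * (|C| + 1) := by
      gcongr
      exact (hy.trans (le_abs_self C)).trans (lt_add_one _).le
    _ < ε := (lt_div_iff₀ (by positivity)).1 hfg

theorem continuous_inner_of_continuous_gram [CompleteSpace H]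
    (hbdd : ∀ x, ∃ C, ∀ᶠ y in 𝓝 x, ‖Φ y‖ ≤ C) (hcont : ∀ x, Continuous fun y => ⟪Φ y, Φ x⟫)
    (f : H) : Continuous fun x => ⟪f, Φ x⟫ := by
  set V := (Submodule.span ℝ (Set.range Φ)).topologicalClosure with hV
  have : CompleteSpace V := (Submodule.isClosed_topologicalClosure _).completeSpace_coe
  have hΦ : ∀ x, V.starProjection (Φ x) = Φ x := fun x =>
    Submodule.starProjection_eq_self_iff.2
      (Submodule.le_topologicalClosure _ (Submodule.subset_span ⟨x, rfl⟩))
  have hproj : ∀ x, ⟪V.starProjection f, Φ x⟫ = ⟪f, Φ x⟫ := fun x => by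
    rw [Submodule.inner_starProjection_left_eq_right, hΦ]
  simp only [← hproj]
  refine continuous_inner_of_mem_closure hbdd (fun g => continuous_inner_of_mem_span hcont) ?_
  rw [← Submodule.topologicalClosure_coe, ← hV]
  exact V.starProjection_apply_mem f

end WeakContinuity

theorem eqOn_support_of_ae_eq {X Y : Type*} [TopologicalSpace X] [MeasurableSpace X]
    [TopologicalSpace Y] [T2Space Y] {μ : Measure X} {f g : X → Y} (hf : Continuous f)
    (hg : Continuous g) (hfg : f =ᵐ[μ] g) : Set.EqOn f g μ.support := by
  intro x hx
  by_contra hne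
  exact Measure.subset_compl_support_of_isOpen (isOpen_ne_fun hf hg) (ae_iff.1 hfg) hne hx

section Measurability

variable {X H ι : Type*} [MeasurableSpace X] [NormedAddCommGroup H] [InnerProductSpace ℝ H]
  {Φ : X → H} {μ : Measure X} {C : ℝ}

theorem integrable_inner_sq [IsFiniteMeasure μ] (hC : ∀ᵐ x ∂μ, ‖Φ x‖ ≤ C) {f : H}
    (hf : AEStronglyMeasurable (fun x => ⟪f, Φ x⟫) μ) :
    Integrable (fun x => ⟪f, Φ x⟫ ^ 2) μ := by
  refine .of_bound (hf.pow 2) ((‖f‖ * C) ^ 2) (hC.mono fun x hx => ?_)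
  rw [norm_pow]
  gcongr
  exact (norm_inner_le_norm _ _).trans (by gcongr)

theorem summable_integral_inner_sq [IsFiniteMeasure μ] {v : ι → H}
    (hv : Orthonormal ℝ v) (hC : ∀ᵐ x ∂μ, ‖Φ x‖ ≤ C)
    (hmeas : ∀ i, AEStronglyMeasurable (fun x => ⟪v i, Φ x⟫) μ) :
    Summable fun i => ∫ x, ⟪v i, Φ x⟫ ^ 2 ∂μ := by
  have hint : ∀ i, Integrable (fun x => ⟪v i, Φ x⟫ ^ 2) μ := fun i =>
    integrable_inner_sq hC (hmeas i)
  refine summable_of_sum_le (c := ∫ _, C ^ 2 ∂μ) (fun i => integral_nonneg fun x => sq_nonneg _)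
    fun s => ?_
  rw [← integral_finsetSum _ fun i _ => hint i]
  refine integral_mono_ae (integrable_finsetSum _ fun i _ => hint i) (integrable_const _)
    (hC.mono fun x hx => ?_)
  calc ∑ i ∈ s, ⟪v i, Φ x⟫ ^ 2 = ∑ i ∈ s, ‖⟪v i, Φ x⟫‖ ^ 2 := by simp
    _ ≤ ‖Φ x‖ ^ 2 := hv.sum_inner_products_le _
    _ ≤ C ^ 2 := by gcongr

theorem countable_setOf_not_inner_ae_eq_zero [IsFiniteMeasure μ] {v : ι → H}
    (hv : Orthonormal ℝ v) (hC : ∀ᵐ x ∂μ, ‖Φ x‖ ≤ C)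
    (hmeas : ∀ i, AEStronglyMeasurable (fun x => ⟪v i, Φ x⟫) μ) :
    {i | ¬ (fun x => ⟪v i, Φ x⟫) =ᵐ[μ] 0}.Countable := by
  refine (summable_integral_inner_sq hv hC hmeas).countable_support.mono ?_
  intro i hi (hzero : ∫ x, ⟪v i, Φ x⟫ ^ 2 ∂μ = 0)
  rw [integral_eq_zero_iff_of_nonneg (fun x => sq_nonneg _)
    (integrable_inner_sq hC (hmeas i))] at hzero
  exact hi (hzero.mono fun x hx => pow_eq_zero_iff two_ne_zero |>.1 hx)

theorem aestronglyMeasurable_of_countable_hilbertBasis (b : HilbertBasis ι ℝ H) {J : Set ι}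
    (hJ : J.Countable) (hmeas : ∀ i ∈ J, AEStronglyMeasurable (fun x => ⟪b i, Φ x⟫) μ)
    (hzero : ∀ᵐ x ∂μ, ∀ i ∉ J, ⟪b i, Φ x⟫ = 0) : AEStronglyMeasurable Φ μ := by
  have := hJ.to_subtype
  refine aestronglyMeasurable_of_tendsto_ae (atTop : Filter (Finset J))
    (f := fun s x => ∑ i ∈ s, ⟪b i, Φ x⟫ • b i)
    (fun s => Finset.aestronglyMeasurable_fun_sum _ fun i _ => (hmeas i i.2).smul_const _) ?_
  filter_upwards [hzero] with x hx
  have hsum : HasSum (fun i => ⟪b i, Φ x⟫ • b i) (Φ x) := by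
    simpa only [b.repr_apply_apply] using b.hasSum_repr (Φ x)
  refine (hasSum_subtype_iff_of_support_subset fun i hi => ?_).2 hsum
  by_contra hiJ
  exact hi (by simp only [hx i hiJ, zero_smul])

theorem integrable_of_continuous_inner [TopologicalSpace X] [BorelSpace X] [CompleteSpace H]
    [IsFiniteMeasure μ] [μ.InnerRegular] (hcont : ∀ f : H, Continuous fun x => ⟪f, Φ x⟫)
    (hC : ∀ᵐ x ∂μ, ‖Φ x‖ ≤ C) : Integrable Φ μ := by
  obtain ⟨w, b, -⟩ := exists_hilbertBasis ℝ H
  have hmeas : ∀ i, AEStronglyMeasurable (fun x => ⟪b i, Φ x⟫) μ := fun i =>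
    (hcont (b i)).aestronglyMeasurable
  refine .of_bound (aestronglyMeasurable_of_countable_hilbertBasis b
    (countable_setOf_not_inner_ae_eq_zero b.orthonormal hC hmeas) (fun i _ => hmeas i) ?_) C hC
  filter_upwards [Measure.support_mem_ae_of_innerRegular (μ := μ)] with x hx i hi
  exact eqOn_support_of_ae_eq (hcont (b i)) continuous_zero (not_not.1 hi) hx

end Measurability

theorem dist_integral_le_of_ae_dist_le {X E : Type*} [MeasurableSpace X] [NormedAddCommGroup E]
    [NormedSpace ℝ E] {μ : Measure X} [IsFiniteMeasure μ] {f g : X → E} {ε : ℝ}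
    (hf : Integrable f μ) (hg : Integrable g μ) (hfg : ∀ᵐ x ∂μ, dist (f x) (g x) ≤ ε) :
    dist (∫ x, f x ∂μ) (∫ x, g x ∂μ) ≤ ε * μ.real Set.univ := by
  simp only [dist_eq_norm] at hfg ⊢
  rw [← integral_sub hf hg]
  exact norm_integral_le_of_norm_le_const hfg

theorem integral_eq_of_forall_exists_ae_dist_le {X E : Type*} [MeasurableSpace X]
    [NormedAddCommGroup E] [NormedSpace ℝ E] {μ ν : Measure X} [IsFiniteMeasure μ]
    [IsFiniteMeasure ν] {g : X → E} (hgμ : Integrable g μ) (hgν : Integrable g ν)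
    (happrox : ∀ ε > 0, ∃ f : X → E, Integrable f μ ∧ Integrable f ν ∧
      ∫ x, f x ∂μ = ∫ x, f x ∂ν ∧ (∀ᵐ x ∂μ, dist (f x) (g x) ≤ ε) ∧
      ∀ᵐ x ∂ν, dist (f x) (g x) ≤ ε) :
    ∫ x, g x ∂μ = ∫ x, g x ∂ν := by
  refine eq_of_forall_dist_le fun δ hδ => ?_
  set m := μ.real Set.univ + ν.real Set.univ
  have hm : 0 ≤ m := by positivity
  obtain ⟨f, hfμ, hfν, hf, hμ, hν⟩ := happrox (δ / (m + 1)) (by positivity)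
  calc dist (∫ x, g x ∂μ) (∫ x, g x ∂ν)
      ≤ dist (∫ x, f x ∂μ) (∫ x, g x ∂μ) + dist (∫ x, f x ∂ν) (∫ x, g x ∂ν) := by
        rw [← hf]
        exact dist_triangle_left _ _ _
    _ ≤ δ / (m + 1) * μ.real Set.univ + δ / (m + 1) * ν.real Set.univ :=
        add_le_add (dist_integral_le_of_ae_dist_le hfμ hgμ hμ)
          (dist_integral_le_of_ae_dist_le hfν hgν hν)
    _ = δ * (m / (m + 1)) := by ring
    _ ≤ δ := mul_le_of_le_one_right hδ.le (div_le_one_of_le₀ (lt_add_one m).le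
        (add_nonneg hm zero_le_one))

theorem eq_of_integral_eq_of_approx {X H : Type*} [TopologicalSpace X] [T2Space X]
    [LocallyCompactSpace X] [MeasurableSpace X] [BorelSpace X] [NormedAddCommGroup H]
    [InnerProductSpace ℝ H] [CompleteSpace H] {Φ : X → H} {μ ν : Measure X} [IsFiniteMeasure μ]
    [IsFiniteMeasure ν] [μ.InnerRegular] [ν.InnerRegular] (hμ : Integrable Φ μ)
    (hν : Integrable Φ ν)
    (happrox : ∀ (g : C_c(X, ℝ)) (ε : ℝ), 0 < ε →
      ∃ f : H, (∀ᵐ x ∂μ, |⟪f, Φ x⟫ - g x| ≤ ε) ∧ ∀ᵐ x ∂ν, |⟪f, Φ x⟫ - g x| ≤ ε)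
    (hΦ : ∫ x, Φ x ∂μ = ∫ x, Φ x ∂ν) : μ = ν := by
  refine Measure.ext_of_integral_eq_on_compactlySupported fun g => ?_
  refine integral_eq_of_forall_exists_ae_dist_le
    (g.continuous.integrable_of_hasCompactSupport g.hasCompactSupport)
    (g.continuous.integrable_of_hasCompactSupport g.hasCompactSupport) fun ε hε => ?_
  obtain ⟨f, hfμ, hfν⟩ := happrox g ε hε
  exact ⟨fun x => ⟪f, Φ x⟫, hμ.const_inner f, hν.const_inner f,
    by rw [integral_inner hμ, integral_inner hν, hΦ], hfμ, hfν⟩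

section Universality

variable {X H : Type*}

/-- `Φ` is a feature map of the kernel `k` with feature space `H`: the RKHS of `k` is
`{T f | f : H}`, where `T f` is the function on `X` represented by `f`. -/
structure IsFeatureMap [NormedAddCommGroup H] [InnerProductSpace ℝ H] (k : X → X → ℝ)
    (T : H → X → ℝ) (Φ : X → H) : Prop where
  kernel_eq : ∀ x y, k x y = ⟪Φ x, Φ y⟫
  apply_eq : ∀ f x, T f x = ⟪f, Φ x⟫

/-- c-universality (for compact `X`): the functions `T f` approximate `C(X)` uniformly. Their own
continuity is not part of the definition; it is a property of the kernel. -/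
def IsCUniversal [TopologicalSpace X] (T : H → X → ℝ) : Prop :=
  ∀ (g : C(X, ℝ)) (ε : ℝ), 0 < ε → ∃ f : H, ∀ x, |T f x - g x| ≤ ε

/-- cc-universality: the functions `T f` approximate continuous functions uniformly on compact sets.
The functions to be approximated are given on the compact set only. -/
def IsCCUniversal [TopologicalSpace X] (T : H → X → ℝ) : Prop :=
  ∀ Z : Set X, IsCompact Z → ∀ (g : C(Z, ℝ)) (ε : ℝ), 0 < ε →
    ∃ f : H, ∀ x : Z, |T f x - g x| ≤ ε

/-- c₀-universality: the functions `T f` approximate `C₀(X)` uniformly. -/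
def IsC0Universal [TopologicalSpace X] (T : H → X → ℝ) : Prop :=
  ∀ (g : C₀(X, ℝ)) (ε : ℝ), 0 < ε → ∃ f : H, ∀ x, |T f x - g x| ≤ ε

/-- The positive cone of `M_b(X)`. On a Hausdorff space, a finite Borel measure is Radon if and only
if it is inner regular for compact sets. -/
def finiteRadonMeasures (X : Type*) [TopologicalSpace X] [MeasurableSpace X] : Set (Measure X) :=
  {μ | IsFiniteMeasure μ ∧ μ.InnerRegular}

/-- The positive cone of `M_bc(X)`. -/
def compactlySupportedRadonMeasures (X : Type*) [TopologicalSpace X] [MeasurableSpace X] :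
    Set (Measure X) :=
  {μ ∈ finiteRadonMeasures X | ∃ K, IsCompact K ∧ μ Kᶜ = 0}

/-- The kernel with feature map `Φ` is characteristic to `𝓜`. Integrability is required because the
Bochner integral of a non-integrable map is `0`. -/
structure IsCharacteristic [MeasurableSpace X] [NormedAddCommGroup H] [InnerProductSpace ℝ H]
    (Φ : X → H) (𝓜 : Set (Measure X)) : Prop where
  integrable : ∀ μ ∈ 𝓜, Integrable Φ μ
  injOn : Set.InjOn (fun μ : Measure X => ∫ x, Φ x ∂μ) 𝓜

theorem IsCUniversal.isC0Universal [TopologicalSpace X] {T : H → X → ℝ} (hT : IsCUniversal T) :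
    IsC0Universal T :=
  fun g => hT g

namespace IsFeatureMap

variable [NormedAddCommGroup H] [InnerProductSpace ℝ H] {k : X → X → ℝ} {T : H → X → ℝ} {Φ : X → H}

theorem exists_norm_le (h : IsFeatureMap k T Φ) {Z : Set X}
    (hZ : BddAbove ((fun x => k x x) '' Z)) : ∃ C, ∀ x ∈ Z, ‖Φ x‖ ≤ C := by
  obtain ⟨C, hC⟩ := hZ
  refine ⟨√C, fun x hx => Real.le_sqrt_of_sq_le ?_⟩
  rw [← real_inner_self_eq_norm_sq, ← h.kernel_eq]
  exact hC ⟨x, hx, rfl⟩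

variable [TopologicalSpace X] [CompleteSpace H]

theorem continuous_inner [WeaklyLocallyCompactSpace X] (h : IsFeatureMap k T Φ)
    (hcont : ∀ x, Continuous fun y => k y x)
    (hbdd : ∀ Z, IsCompact Z → BddAbove ((fun x => k x x) '' Z)) (f : H) :
    Continuous fun x => ⟪f, Φ x⟫ := by
  simp only [h.kernel_eq] at hcont
  refine continuous_inner_of_continuous_gram (fun x => ?_) hcont f
  obtain ⟨Z, hZ, hxZ⟩ := exists_compact_mem_nhds x
  obtain ⟨C, hC⟩ := h.exists_norm_le (hbdd Z hZ)
  exact ⟨C, mem_of_superset hxZ hC⟩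

variable [MeasurableSpace X] [BorelSpace X]

theorem integrable [WeaklyLocallyCompactSpace X] (h : IsFeatureMap k T Φ)
    (hcont : ∀ x, Continuous fun y => k y x)
    (hbdd : ∀ Z, IsCompact Z → BddAbove ((fun x => k x x) '' Z)) {μ : Measure X}
    (hμ : μ ∈ finiteRadonMeasures X) {Z : Set X} (hZ : BddAbove ((fun x => k x x) '' Z))
    (hμZ : μ Zᶜ = 0) : Integrable Φ μ := by
  obtain ⟨_, _⟩ := hμ
  obtain ⟨C, hC⟩ := h.exists_norm_le hZ
  exact integrable_of_continuous_inner (h.continuous_inner hcont hbdd)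
    (mem_of_superset (mem_ae_iff.2 hμZ) hC)

variable [T2Space X] [LocallyCompactSpace X]

theorem eq_of_integral_eq (h : IsFeatureMap k T Φ) {μ ν : Measure X}
    (hμ : μ ∈ finiteRadonMeasures X) (hν : ν ∈ finiteRadonMeasures X) (hμΦ : Integrable Φ μ)
    (hνΦ : Integrable Φ ν) {Z : Set X} (hμZ : μ Zᶜ = 0) (hνZ : ν Zᶜ = 0)
    (happrox : ∀ (g : C_c(X, ℝ)) (ε : ℝ), 0 < ε → ∃ f : H, ∀ x ∈ Z, |T f x - g x| ≤ ε)
    (hΦ : ∫ x, Φ x ∂μ = ∫ x, Φ x ∂ν) : μ = ν := by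
  obtain ⟨_, _⟩ := hμ
  obtain ⟨_, _⟩ := hν
  refine eq_of_integral_eq_of_approx hμΦ hνΦ (fun g ε hε => ?_) hΦ
  obtain ⟨f, hf⟩ := happrox g ε hε
  simp only [h.apply_eq] at hf
  exact ⟨f, mem_of_superset (mem_ae_iff.2 hμZ) hf, mem_of_superset (mem_ae_iff.2 hνZ) hf⟩

theorem isCharacteristic_of_isC0Universal (h : IsFeatureMap k T Φ)
    (hcont : ∀ x, Continuous fun y => k y x) (hbdd : BddAbove (Set.range fun x => k x x))
    (hT : IsC0Universal T) : IsCharacteristic Φ (finiteRadonMeasures X) := by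
  have hint : ∀ μ ∈ finiteRadonMeasures X, Integrable Φ μ := fun μ hμ =>
    h.integrable hcont (fun Z _ => hbdd.mono (Set.image_subset_range _ Z)) hμ
      (Set.image_univ ▸ hbdd) (by simp)
  refine ⟨hint, fun μ hμ ν hν => ?_⟩
  refine h.eq_of_integral_eq hμ hν (hint μ hμ) (hint ν hν) (Z := Set.univ) (by simp) (by simp)
    fun g ε hε => ?_
  obtain ⟨f, hf⟩ := hT (g : C₀(X, ℝ)) ε hε
  exact ⟨f, fun x _ => hf x⟩

theorem isCharacteristic_of_isCCUniversal (h : IsFeatureMap k T Φ)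
    (hcont : ∀ x, Continuous fun y => k y x)
    (hbdd : ∀ Z, IsCompact Z → BddAbove ((fun x => k x x) '' Z)) (hT : IsCCUniversal T) :
    IsCharacteristic Φ (compactlySupportedRadonMeasures X) := by
  have hint : ∀ μ ∈ compactlySupportedRadonMeasures X, Integrable Φ μ :=
    fun μ ⟨hμ, K, hK, hμK⟩ => h.integrable hcont hbdd hμ (hbdd K hK) hμK
  refine ⟨hint, fun μ hμ ν hν => ?_⟩
  obtain ⟨hμR, K, hK, hμK⟩ := id hμ
  obtain ⟨hνR, L, hL, hνL⟩ := id hν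
  refine h.eq_of_integral_eq hμR hνR (hint μ hμ) (hint ν hν) (Z := K ∪ L)
    (measure_mono_null (Set.compl_subset_compl.2 Set.subset_union_left) hμK)
    (measure_mono_null (Set.compl_subset_compl.2 Set.subset_union_right) hνL) fun g ε hε => ?_
  obtain ⟨f, hf⟩ := hT (K ∪ L) (hK.union hL) ((g : C(X, ℝ)).restrict (K ∪ L)) ε hε
  exact ⟨f, fun x hx => hf ⟨x, hx⟩⟩

end IsFeatureMap

end Universality

theorem stmt13_general {X H : Type*} [TopologicalSpace X] [T2Space X] [LocallyCompactSpace X]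
    [MeasurableSpace X] [BorelSpace X] [NormedAddCommGroup H] [InnerProductSpace ℝ H]
    [CompleteSpace H] {k : X → X → ℝ} {T : H → X → ℝ} {Φ : X → H} (h : IsFeatureMap k T Φ)
    (hcont : ∀ x, Continuous fun y => k y x)
    (hbdd : ∀ Z, IsCompact Z → BddAbove ((fun x => k x x) '' Z)) :
    (∀ [CompactSpace X], IsCUniversal T → IsCharacteristic Φ (finiteRadonMeasures X)) ∧
    (IsCCUniversal T → IsCharacteristic Φ (compactlySupportedRadonMeasures X)) ∧
    (BddAbove (Set.range fun x => k x x) → IsC0Universal T →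
      IsCharacteristic Φ (finiteRadonMeasures X)) :=
  ⟨fun hT => h.isCharacteristic_of_isC0Universal hcont
      (Set.image_univ ▸ hbdd Set.univ isCompact_univ) hT.isC0Universal,
    h.isCharacteristic_of_isCCUniversal hcont hbdd,
    h.isCharacteristic_of_isC0Universal hcont⟩

/-- If `k` is c-universal (compact Hausdorff `X`), cc-universal
(locally compact Hausdorff `X`, `k` bounded continuous), or c₀-universal (locally
compact Hausdorff `X`, `k` bounded with `k(·,x) ∈ C₀(X)`), then `k` is characteristic to
the set of Radon probability measures in `M_b(X)`, `M_bc(X)`, `M_b(X)` respectively,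
i.e. `P ↦ ∫ k(·,x) dP(x) = ∫ Φ dP` is injective on that set of probability measures.
In each case the RKHS `H` of `k` is presented by an injective linear map
`T : H →ₗ[ℝ] (X → ℝ)` and a feature map `Φ` with `k x y = ⟪Φ x, Φ y⟫` and
`T f x = ⟪f, Φ x⟫`. -/
theorem stmt13 :
    -- c-universal on a compact Hausdorff space ⇒ characteristic to Radon probability
    -- measures in M_b(X)
    (∀ (X : Type) [TopologicalSpace X] [CompactSpace X] [T2Space X]
        [MeasurableSpace X] [BorelSpace X]
        (k : X → X → ℝ), (Continuous fun p : X × X => k p.1 p.2) →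
        ∀ (H : Type) [NormedAddCommGroup H] [InnerProductSpace ℝ H] [CompleteSpace H]
          (T : H →ₗ[ℝ] (X → ℝ)) (Φ : X → H),
          Function.Injective T →
          (∀ x y : X, k x y = ⟪Φ x, Φ y⟫) →
          (∀ (f : H) (x : X), T f x = ⟪f, Φ x⟫) →
          (∀ (g : C(X, ℝ)) (ε : ℝ), 0 < ε → ∃ f : H, ∀ x : X, |T f x - g x| ≤ ε) →
          ∀ P Q : Measure X, IsProbabilityMeasure P → IsProbabilityMeasure Q →
            P.InnerRegular → Q.InnerRegular →
            (∫ x, Φ x ∂P) = (∫ x, Φ x ∂Q) → P = Q) ∧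
    -- cc-universal on a locally compact Hausdorff space ⇒ characteristic to Radon
    -- probability measures in M_bc(X)
    (∀ (X : Type) [TopologicalSpace X] [T2Space X] [LocallyCompactSpace X]
        [MeasurableSpace X] [BorelSpace X]
        (k : X → X → ℝ), (Continuous fun p : X × X => k p.1 p.2) →
        (∃ C : ℝ, ∀ x y : X, |k x y| ≤ C) →
        ∀ (H : Type) [NormedAddCommGroup H] [InnerProductSpace ℝ H] [CompleteSpace H]
          (T : H →ₗ[ℝ] (X → ℝ)) (Φ : X → H),
          Function.Injective T →
          (∀ x y : X, k x y = ⟪Φ x, Φ y⟫) →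
          (∀ (f : H) (x : X), T f x = ⟪f, Φ x⟫) →
          (∀ (Z : Set X), IsCompact Z → ∀ (g : C(Z, ℝ)) (ε : ℝ), 0 < ε →
            ∃ f : H, ∀ x : Z, |T f (x : X) - g x| ≤ ε) →
          ∀ P Q : Measure X, IsProbabilityMeasure P → IsProbabilityMeasure Q →
            P.InnerRegular → Q.InnerRegular →
            (∃ K : Set X, IsCompact K ∧ P Kᶜ = 0) →
            (∃ K : Set X, IsCompact K ∧ Q Kᶜ = 0) →
            (∫ x, Φ x ∂P) = (∫ x, Φ x ∂Q) → P = Q) ∧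
    -- c₀-universal on a locally compact Hausdorff space ⇒ characteristic to Radon
    -- probability measures in M_b(X)
    (∀ (X : Type) [TopologicalSpace X] [T2Space X] [LocallyCompactSpace X]
        [MeasurableSpace X] [BorelSpace X]
        (k : X → X → ℝ), (∃ C : ℝ, ∀ x y : X, |k x y| ≤ C) →
        (∀ x : X, Continuous (fun y => k y x) ∧
          Tendsto (fun y => k y x) (cocompact X) (𝓝 0)) →
        ∀ (H : Type) [NormedAddCommGroup H] [InnerProductSpace ℝ H] [CompleteSpace H]
          (T : H →ₗ[ℝ] (X → ℝ)) (Φ : X → H),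
          Function.Injective T →
          (∀ x y : X, k x y = ⟪Φ x, Φ y⟫) →
          (∀ (f : H) (x : X), T f x = ⟪f, Φ x⟫) →
          (∀ (g : C₀(X, ℝ)) (ε : ℝ), 0 < ε → ∃ f : H, ∀ x : X, |T f x - g x| ≤ ε) →
          ∀ P Q : Measure X, IsProbabilityMeasure P → IsProbabilityMeasure Q →
            P.InnerRegular → Q.InnerRegular →
            (∫ x, Φ x ∂P) = (∫ x, Φ x ∂Q) → P = Q) := by
  refine ⟨?_, ?_, ?_⟩
  · intro X _ _ _ _ _ k hk H _ _ _ T Φ _ hΦ hT huniv P Q _ _ hP hQ heq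
    exact ((stmt13_general ⟨hΦ, hT⟩ (fun x => by fun_prop) fun Z hZ =>
      hZ.bddAbove_image (by fun_prop)).1 huniv).injOn
        ⟨inferInstance, hP⟩ ⟨inferInstance, hQ⟩ heq
  · intro X _ _ _ _ _ k hk _ H _ _ _ T Φ _ hΦ hT huniv P Q _ _ hP hQ hPc hQc heq
    exact ((stmt13_general ⟨hΦ, hT⟩ (fun x => by fun_prop) fun Z hZ =>
      hZ.bddAbove_image (by fun_prop)).2.1 huniv).injOn
        ⟨⟨inferInstance, hP⟩, hPc⟩ ⟨⟨inferInstance, hQ⟩, hQc⟩ heq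
  · intro X _ _ _ _ _ k ⟨C, hC⟩ hk H _ _ _ T Φ _ hΦ hT huniv P Q _ _ hP hQ heq
    have hbdd : BddAbove (Set.range fun x => k x x) :=
      ⟨C, by rintro _ ⟨x, rfl⟩; exact (le_abs_self _).trans (hC x x)⟩
    exact ((stmt13_general ⟨hΦ, hT⟩ (fun x => (hk x).1) fun Z _ =>
      hbdd.mono (Set.image_subset_range _ Z)).2.2 hbdd huniv).injOn
        ⟨inferInstance, hP⟩ ⟨inferInstance, hQ⟩ heq
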